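/- arXiv:2109.07845 — 2 statements merged into one kernel-verified Lean document; each statement's English description precedes it below -/
import Mathlib

section
/- With the bracket setup below and assuming additionally m ≥ 4 (i.e. n ≥ 6), for all a, b, c, d ∈ {1,…,n−1} and all a_2, …, a_{m−1} ∈ {1,…,n−1} we have [a,b,a_3,…,a_{m−2},c,d] + [b,a,a_3,…,a_{m−2},c,d] + [a,b,a_3,…,a_{m−2},d,c] + [b,a,a_3,…,a_{m−2},d,c] = 0, where the middle entries a_3,…,a_{m−2} are the same in all four brackets. -/
open MvPolynomial

/-- The row vector `(∂φ_1/∂x_{a_1})(∂φ_2/∂x_{a_2})⋯(∂φ_r/∂x_{a_r})` (0-based indexing). -/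
noncomputable def brkVec {K : Type*} [Field K] {N : ℕ} {b : ℕ → ℕ}
    (φ : ∀ r : ℕ, Matrix (Fin (b r)) (Fin (b (r + 1))) (MvPolynomial (Fin N) K))
    (a : ℕ → Fin N) : ∀ r : ℕ, Fin (b r) → MvPolynomial (Fin N) K
  | 0 => fun _ => 1
  | (r + 1) => Matrix.vecMul (brkVec φ a r) (fun p q => pderiv (a r) (φ r p q))

/-- The bracket `[a_1, …, a_m]`, a `1 × 1` matrix (since `b m = 1`) identified with a
polynomial via the sum of its entries. -/
noncomputable def brk {K : Type*} [Field K] {N : ℕ} {b : ℕ → ℕ}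
    (φ : ∀ r : ℕ, Matrix (Fin (b r)) (Fin (b (r + 1))) (MvPolynomial (Fin N) K))
    (m : ℕ) (a : ℕ → Fin N) : MvPolynomial (Fin N) K :=
  ∑ j : Fin (b m), brkVec φ a m j

/-!
Differentiating `φ_r φ_{r+1} = 0` once gives `φ_r ∂φ_{r+1} = -∂φ_r φ_{r+1}`, so right
multiplication by `∂φ_{r+1}` carries the row space of `φ_r` into that of `φ_{r+1}`. Differentiating
twice rewrites `∂_a φ_r ∂_b φ_{r+1} + ∂_b φ_r ∂_a φ_{r+1}` as
`-(∂_a ∂_b φ_r) φ_{r+1} - φ_r (∂_a ∂_b φ_{r+1})`. At the left end `φ_{r+1}` is linear and only the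
first term survives: the sum of the two partial brackets lies in the row space of `φ_{r+1}`. This
persists along the middle entries. At the right end `φ_r` is linear and only the second term
survives: it annihilates the row space of `φ_{r-1}`, because `φ_{r-1} φ_r = 0`.
-/

open scoped Matrix

section Matrix

variable {R A ι κ μ ν : Type*} [CommSemiring R] [CommRing A] [Algebra R A] [Fintype κ]

/-- The symmetrization in `D`, `E` of the product `D(M) E(N)`, derivations acting entrywise. Two
brackets that differ by a swap of adjacent entries add up to one in which this matrix replaces the
two corresponding factors. -/
def symmDerivMul (D E : Derivation R A A) (M : Matrix ι κ A) (N : Matrix κ ν A) : Matrix ι ν A :=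
  M.map D * N.map E + M.map E * N.map D

theorem map_derivation_mul (D : Derivation R A A) (M : Matrix ι κ A) (N : Matrix κ ν A) :
    (M * N).map D = M.map D * N + M * N.map D := by
  ext x y
  simp only [Matrix.map_apply, Matrix.add_apply, Matrix.mul_apply, map_sum, Derivation.leibniz,
    smul_eq_mul, ← Finset.sum_add_distrib]
  exact Finset.sum_congr rfl fun _ _ => by ring

theorem map_derivation_mul_add_mul_map_derivation_eq_zero {M : Matrix ι κ A} {N : Matrix κ ν A}
    (hMN : M * N = 0) (D : Derivation R A A) : M.map D * N + M * N.map D = 0 := by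
  rw [← map_derivation_mul, hMN, Matrix.map_zero _ (map_zero D)]

theorem symmDerivMul_eq_of_mul_eq_zero {M : Matrix ι κ A} {N : Matrix κ ν A} (hMN : M * N = 0)
    (D E : Derivation R A A) :
    symmDerivMul D E M N = -((M.map D).map E * N) - M * (N.map D).map E := by
  have hED := congrArg (Matrix.map · E) (map_derivation_mul_add_mul_map_derivation_eq_zero hMN D)
  simp only [Matrix.map_add _ (map_add E), Matrix.map_zero _ (map_zero E),
    map_derivation_mul] at hED
  rw [symmDerivMul, ← sub_eq_zero, ← hED]
  abel

variable [Fintype ι]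

theorem vecMul_map_derivation_mem_range {M : Matrix ι κ A} {N : Matrix κ ν A} (hMN : M * N = 0)
    (D : Derivation R A A) {v : κ → A} (hv : v ∈ LinearMap.range M.vecMulLinear) :
    v ᵥ* N.map D ∈ LinearMap.range N.vecMulLinear := by
  obtain ⟨u, rfl⟩ := hv
  have hneg : M * N.map D = -(M.map D * N) :=
    eq_neg_of_add_eq_zero_right (map_derivation_mul_add_mul_map_derivation_eq_zero hMN D)
  refine ⟨-(u ᵥ* M.map D), ?_⟩
  simp only [Matrix.vecMulLinear_apply, Matrix.vecMul_vecMul, Matrix.neg_vecMul, hneg,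
    Matrix.vecMul_neg]

theorem vecMul_symmDerivMul_mem_range {M : Matrix ι κ A} {N : Matrix κ ν A} (hMN : M * N = 0)
    {D E : Derivation R A A} (hN : (N.map D).map E = 0) (v : ι → A) :
    v ᵥ* symmDerivMul D E M N ∈ LinearMap.range N.vecMulLinear := by
  refine ⟨-(v ᵥ* (M.map D).map E), ?_⟩
  rw [symmDerivMul_eq_of_mul_eq_zero hMN, hN, Matrix.mul_zero, sub_zero,
    Matrix.vecMulLinear_apply, Matrix.neg_vecMul, Matrix.vecMul_neg, Matrix.vecMul_vecMul]

theorem vecMul_symmDerivMul_eq_zero [Fintype μ] {L : Matrix ι κ A} {M : Matrix κ μ A}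
    {N : Matrix μ ν A} (hLM : L * M = 0) (hMN : M * N = 0) {D E : Derivation R A A}
    (hM : (M.map D).map E = 0) {v : κ → A} (hv : v ∈ LinearMap.range L.vecMulLinear) :
    v ᵥ* symmDerivMul D E M N = 0 := by
  obtain ⟨u, rfl⟩ := hv
  rw [symmDerivMul_eq_of_mul_eq_zero hMN, hM, Matrix.zero_mul, neg_zero, zero_sub,
    Matrix.vecMulLinear_apply, Matrix.vecMul_vecMul, Matrix.mul_neg, ← Matrix.mul_assoc, hLM,
    Matrix.zero_mul, neg_zero, Matrix.vecMul_zero]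

end Matrix

theorem totalDegree_pderiv_le {R σ : Type*} [CommSemiring R] (i : σ) (f : MvPolynomial σ R) :
    (pderiv i f).totalDegree ≤ f.totalDegree - 1 := by
  conv_lhs => rw [f.as_sum, map_sum]
  refine totalDegree_finsetSum_le fun s hs => ?_
  exact (isHomogeneous_monomial _ rfl).pderiv.totalDegree_le.trans
    (Nat.sub_le_sub_right (le_totalDegree hs) 1)

theorem map_pderiv_map_pderiv_eq_zero {R σ ι κ : Type*} [CommSemiring R]
    {M : Matrix ι κ (MvPolynomial σ R)} (hM : ∀ p q, (M p q).totalDegree ≤ 1) (i j : σ) :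
    (M.map (pderiv i)).map (pderiv j) = 0 := by
  ext p q : 1
  have hconst : (pderiv i (M p q)).totalDegree = 0 :=
    Nat.le_zero.1 ((totalDegree_pderiv_le i _).trans (Nat.sub_le_sub_right (hM p q) 1))
  rw [Matrix.map_apply, Matrix.map_apply, totalDegree_eq_zero_iff_eq_C.1 hconst, pderiv_C,
    Matrix.zero_apply]

section Swap

variable {α β : Type*} [DecidableEq α] (f : α → β)

theorem comp_swap_eq_ite (i j : α) :
    f ∘ Equiv.swap i j = fun s => if s = i then f j else if s = j then f i else f s := by
  funext s
  simp only [Function.comp_apply, Equiv.swap_apply_def, apply_ite f]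

theorem comp_swap_comp_swap_eq_ite {i j k l : α} (hik : i ≠ k) (hil : i ≠ l) (hjk : j ≠ k)
    (hjl : j ≠ l) :
    (f ∘ Equiv.swap i j) ∘ Equiv.swap k l = fun s =>
      if s = i then f j else if s = j then f i
      else if s = k then f l else if s = l then f k else f s := by
  funext s
  simp only [comp_swap_eq_ite]
  grind

end Swap

section Bracket

variable {K : Type*} [Field K] {N : ℕ} {b : ℕ → ℕ}
  (φ : ∀ r : ℕ, Matrix (Fin (b r)) (Fin (b (r + 1))) (MvPolynomial (Fin N) K))

theorem brkVec_succ (a : ℕ → Fin N) (r : ℕ) :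
    brkVec φ a (r + 1) = brkVec φ a r ᵥ* (φ r).map (pderiv (a r)) := rfl

theorem brkVec_congr {a a' : ℕ → Fin N} {r : ℕ} (h : ∀ s < r, a s = a' s) :
    brkVec φ a r = brkVec φ a' r := by
  induction r with
  | zero => rfl
  | succ r ih =>
    rw [brkVec_succ, brkVec_succ, ih fun s hs => h s (hs.trans r.lt_succ_self),
      h r r.lt_succ_self]

theorem brkVec_add_comp_swap (a : ℕ → Fin N) (i : ℕ) :
    brkVec φ a (i + 2) + brkVec φ (a ∘ Equiv.swap i (i + 1)) (i + 2) =
      brkVec φ a i ᵥ* symmDerivMul (pderiv (a i)) (pderiv (a (i + 1))) (φ i) (φ (i + 1)) := by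
  have hprefix : brkVec φ (a ∘ Equiv.swap i (i + 1)) i = brkVec φ a i :=
    brkVec_congr φ fun s hs => congrArg a (Equiv.swap_apply_of_ne_of_ne (by lia) (by lia))
  simp only [brkVec_succ, hprefix, Function.comp_apply, Equiv.swap_apply_left,
    Equiv.swap_apply_right, Matrix.vecMul_vecMul, symmDerivMul, Matrix.vecMul_add]

variable {φ} {i j : ℕ}

theorem brkVec_add_comp_swap_mem_range (hcomp : ∀ r, i ≤ r → r < j → φ r * φ (r + 1) = 0)
    (hlin : ∀ p q, (φ (i + 1) p q).totalDegree ≤ 1) (a : ℕ → Fin N) (hij : i + 1 ≤ j) :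
    brkVec φ a (j + 1) + brkVec φ (a ∘ Equiv.swap i (i + 1)) (j + 1) ∈
      LinearMap.range (φ j).vecMulLinear := by
  induction j, hij using Nat.le_induction with
  | base =>
    rw [brkVec_add_comp_swap]
    exact vecMul_symmDerivMul_mem_range (hcomp i le_rfl i.lt_succ_self)
      (map_pderiv_map_pderiv_eq_zero hlin _ _) _
  | succ j hij ih =>
    have hfix : (a ∘ Equiv.swap i (i + 1)) (j + 1) = a (j + 1) :=
      congrArg a (Equiv.swap_apply_of_ne_of_ne (by lia) (by lia))
    rw [brkVec_succ φ a, brkVec_succ φ (a ∘ _), hfix, ← Matrix.add_vecMul]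
    exact vecMul_map_derivation_mem_range (hcomp j (by lia) j.lt_succ_self) _
      (ih fun r hir hrj => hcomp r hir (by lia))

theorem brkVec_add_comp_swap_add_comp_swap_eq_zero (hij : i + 2 ≤ j)
    (hcomp : ∀ r, i ≤ r → r ≤ j → φ r * φ (r + 1) = 0)
    (hi : ∀ p q, (φ (i + 1) p q).totalDegree ≤ 1) (hj : ∀ p q, (φ j p q).totalDegree ≤ 1)
    (a : ℕ → Fin N) :
    brkVec φ a (j + 2) + brkVec φ (a ∘ Equiv.swap i (i + 1)) (j + 2)
      + brkVec φ (a ∘ Equiv.swap j (j + 1)) (j + 2)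
      + brkVec φ ((a ∘ Equiv.swap i (i + 1)) ∘ Equiv.swap j (j + 1)) (j + 2) = 0 := by
  obtain ⟨k, rfl⟩ : ∃ k, j = k + 1 := ⟨j - 1, by lia⟩
  have hfix : ∀ s, k + 1 ≤ s → (a ∘ Equiv.swap i (i + 1)) s = a s := fun s hs =>
    congrArg a (Equiv.swap_apply_of_ne_of_ne (by lia) (by lia))
  have hrange := brkVec_add_comp_swap_mem_range (j := k)
    (fun r hir hrk => hcomp r hir (by lia)) hi a (by lia)
  calc
    _ = (brkVec φ a (k + 1 + 2) + brkVec φ (a ∘ Equiv.swap (k + 1) (k + 2)) (k + 1 + 2))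
        + (brkVec φ (a ∘ Equiv.swap i (i + 1)) (k + 1 + 2)
          + brkVec φ ((a ∘ Equiv.swap i (i + 1)) ∘ Equiv.swap (k + 1) (k + 2)) (k + 1 + 2)) := by
      abel
    _ = (brkVec φ a (k + 1) + brkVec φ (a ∘ Equiv.swap i (i + 1)) (k + 1)) ᵥ*
        symmDerivMul (pderiv (a (k + 1))) (pderiv (a (k + 2))) (φ (k + 1)) (φ (k + 2)) := by
      rw [brkVec_add_comp_swap, brkVec_add_comp_swap, hfix (k + 1) le_rfl,
        hfix (k + 2) (k + 1).le_succ, Matrix.add_vecMul]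
    _ = 0 := vecMul_symmDerivMul_eq_zero (hcomp k (by lia) k.le_succ)
      (hcomp (k + 1) (by lia) le_rfl) (map_pderiv_map_pderiv_eq_zero hj _ _) hrange

end Bracket

theorem stmt7_general {K : Type*} [Field K] {N i j : ℕ} (hij : i + 2 ≤ j) {b : ℕ → ℕ}
    (φ : ∀ r : ℕ, Matrix (Fin (b r)) (Fin (b (r + 1))) (MvPolynomial (Fin N) K))
    (hcomp : ∀ r, i ≤ r → r ≤ j → φ r * φ (r + 1) = 0)
    (hi : ∀ p q, (φ (i + 1) p q).totalDegree ≤ 1) (hj : ∀ p q, (φ j p q).totalDegree ≤ 1)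
    (a : ℕ → Fin N) :
    brk φ (j + 2) a + brk φ (j + 2) (a ∘ Equiv.swap i (i + 1))
      + brk φ (j + 2) (a ∘ Equiv.swap j (j + 1))
      + brk φ (j + 2) ((a ∘ Equiv.swap i (i + 1)) ∘ Equiv.swap j (j + 1)) = 0 := by
  simp only [brk, ← Finset.sum_add_distrib]
  exact Finset.sum_eq_zero fun q _ =>
    congrFun (brkVec_add_comp_swap_add_comp_swap_eq_zero hij hcomp hi hj a) q

/-- In the bracket setup with `m ≥ 4` (i.e. `n ≥ 6`):
`[a,b,…,c,d] + [b,a,…,c,d] + [a,b,…,d,c] + [b,a,…,d,c] = 0`, where the middle entries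
are the same in all four brackets. Here the sequence `a` is 0-based, so the swaps happen
at positions `0,1` and `m−2, m−1`. -/
theorem stmt7 (K : Type*) [Field K] (n : ℕ) (hn : 6 ≤ n) (m : ℕ) (hm : m = n - 2)
    (b : ℕ → ℕ) (hbpos : ∀ r, r ≤ m → 0 < b r) (hb0 : b 0 = 1) (hbm : b m = 1)
    (φ : ∀ r : ℕ, Matrix (Fin (b r)) (Fin (b (r + 1))) (MvPolynomial (Fin (n - 1)) K))
    (hcomp : ∀ r, r + 2 ≤ m → φ r * φ (r + 1) = 0)
    (hdeg1 : ∀ p q, (φ 0 p q).IsHomogeneous 2)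
    (hdegm : ∀ p q, (φ (m - 1) p q).IsHomogeneous 2)
    (hdegmid : ∀ r, 1 ≤ r → r + 2 ≤ m → ∀ p q, (φ r p q).IsHomogeneous 1)
    (a : ℕ → Fin (n - 1)) :
    brk φ m a
      + brk φ m (fun s => if s = 0 then a 1 else if s = 1 then a 0 else a s)
      + brk φ m (fun s => if s = m - 2 then a (m - 1) else if s = m - 1 then a (m - 2) else a s)
      + brk φ m (fun s =>
          if s = 0 then a 1 else if s = 1 then a 0
          else if s = m - 2 then a (m - 1) else if s = m - 1 then a (m - 2) else a s)
      = 0 := by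
  obtain ⟨k, rfl⟩ : ∃ k, m = k + 4 := ⟨m - 4, by lia⟩
  have hsum := stmt7_general (i := 0) (j := k + 2) (by lia) φ (fun r _ hr => hcomp r (by lia))
    (fun p q => (hdegmid 1 le_rfl (by lia) p q).totalDegree_le)
    (fun p q => (hdegmid (k + 2) (by lia) le_rfl p q).totalDegree_le) a
  rwa [comp_swap_comp_swap_eq_ite a (by lia) (by lia) (by lia) (by lia), comp_swap_eq_ite,
    comp_swap_eq_ite] at hsum
end

section
/- With the brace setup below (n ≥ 5), for every permutation τ ∈ S_{n−4} and all indices i, j, k, ℓ, a_1, …, a_{n−4} ∈ {1,…,n−1} we have {i, j, a_{τ(1)}, …, a_{τ(n−4)}, k, ℓ} = sign(τ) · {i, j, a_1, …, a_{n−4}, k, ℓ}. -/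
open MvPolynomial

/-- The row vector `P(a_1,a_2)·(∂φ_2/∂x_{a_3})⋯(∂φ_{r+1}/∂x_{a_{r+2}})` (0-based: the
sequence `c` is indexed from 0, `φ r` is the paper's `φ_{r+1}`). -/
noncomputable def braceVec {K : Type*} [Field K] {N : ℕ} {b : ℕ → ℕ}
    (φ : ∀ r : ℕ, Matrix (Fin (b r)) (Fin (b (r + 1))) (MvPolynomial (Fin N) K))
    (P : Fin N → Fin N → Fin (b 1) → K)
    (c : ℕ → Fin N) : ∀ r : ℕ, Fin (b (r + 1)) → MvPolynomial (Fin N) K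
  | 0 => fun q => C (P (c 0) (c 1) q)
  | (r + 1) => Matrix.vecMul (braceVec φ P c r)
      (fun p q => pderiv (c (r + 2)) (φ (r + 1) p q))

/-- The brace symbol `{a_1 a_2 ⋯ a_n} = P(a_1,a_2)·(∂φ_2/∂x_{a_3})⋯(∂φ_{m−1}/∂x_{a_{n−2}})
·Q(a_{n−1},a_n)` (a scalar, realized as a constant polynomial). Here `nn` is the paper's
`n`, `m = nn − 2`, and `h` records `m − 1 = m − 2 + 1`. -/
noncomputable def braceFn {K : Type*} [Field K] {N : ℕ} {b : ℕ → ℕ}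
    (φ : ∀ r : ℕ, Matrix (Fin (b r)) (Fin (b (r + 1))) (MvPolynomial (Fin N) K))
    (P : Fin N → Fin N → Fin (b 1) → K)
    (m : ℕ) (Q : Fin N → Fin N → Fin (b (m - 1)) → K) (h : m - 1 = m - 2 + 1)
    (nn : ℕ) (c : ℕ → Fin N) : MvPolynomial (Fin N) K :=
  ∑ p : Fin (b (m - 1)),
    braceVec φ P c (m - 2) (Fin.cast (congrArg b h) p) * C (Q (c (nn - 2)) (c (nn - 1)) p)

/-!
Differentiating `A * B = 0` once in each of the directions `i` and `j`, for matrices `A`, `B` of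
linear forms, kills every term containing a second derivative and leaves
`∂ᵢA * ∂ⱼB = -(∂ⱼA * ∂ᵢB)`. Applied to consecutive maps of the complex, this says that exchanging
two adjacent middle indices negates the brace; adjacent transpositions generate the symmetric
group, so the brace is alternating in its middle entries.
-/

section PDeriv

variable {σ R l m n : Type*}

theorem pderiv_pderiv_eq_zero_of_isHomogeneous_one [CommSemiring R] {f : MvPolynomial σ R}
    (hf : f.IsHomogeneous 1) (i j : σ) : pderiv i (pderiv j f) = 0 := by
  have hconst : (pderiv j f).IsHomogeneous 0 := hf.pderiv
  rw [← totalDegree_zero_iff_isHomogeneous, totalDegree_eq_zero_iff_eq_C] at hconst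
  rw [hconst, pderiv_C]

theorem pderiv_pderiv_mul_of_isHomogeneous_one [CommSemiring R] {f g : MvPolynomial σ R}
    (hf : f.IsHomogeneous 1) (hg : g.IsHomogeneous 1) (i j : σ) :
    pderiv i (pderiv j (f * g)) = pderiv i f * pderiv j g + pderiv j f * pderiv i g := by
  simp only [pderiv_mul, map_add, pderiv_pderiv_eq_zero_of_isHomogeneous_one hf,
    pderiv_pderiv_eq_zero_of_isHomogeneous_one hg, zero_mul, mul_zero, zero_add, add_zero]
  exact add_comm _ _

theorem map_pderiv_mul_map_pderiv_eq_neg [CommRing R] [Fintype m]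
    {A : Matrix l m (MvPolynomial σ R)} {B : Matrix m n (MvPolynomial σ R)}
    (hA : ∀ p q, (A p q).IsHomogeneous 1) (hB : ∀ p q, (B p q).IsHomogeneous 1)
    (hAB : A * B = 0) (i j : σ) :
    A.map (pderiv i) * B.map (pderiv j) = -(A.map (pderiv j) * B.map (pderiv i)) := by
  rw [eq_neg_iff_add_eq_zero]
  ext1 p q
  calc (A.map (pderiv i) * B.map (pderiv j) + A.map (pderiv j) * B.map (pderiv i)) p q
      = pderiv i (pderiv j ((A * B) p q)) := by
        simp only [Matrix.add_apply, Matrix.mul_apply, Matrix.map_apply, map_sum,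
          pderiv_pderiv_mul_of_isHomogeneous_one (hA _ _) (hB _ _), Finset.sum_add_distrib]
    _ = 0 := by rw [hAB, Matrix.zero_apply, map_zero, map_zero]

end PDeriv

section Permutation

theorem comp_perm_eq_sign_smul_of_adjacent_swap {α M : Type*} [AddCommGroup M] {k : ℕ}
    {F : (Fin k → α) → M}
    (hF : ∀ (v : Fin k → α) (i j : Fin k), (i : ℕ) + 1 = j → F (v ∘ Equiv.swap i j) = -F v)
    (v : Fin k → α) (τ : Equiv.Perm (Fin k)) :
    F (v ∘ τ) = (Equiv.Perm.sign τ : ℤ) • F v := by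
  cases k with
  | zero => simp [Subsingleton.elim τ 1]
  | succ k =>
    have hτ : τ ∈ Submonoid.closure (Set.range fun i : Fin k => Equiv.swap i.castSucc i.succ) :=
      Equiv.Perm.mclosure_swap_castSucc_succ k ▸ Submonoid.mem_top τ
    induction hτ using Submonoid.closure_induction_right with
    | one => simp
    | mul_right ρ _ s hs ih =>
      obtain ⟨i, rfl⟩ := hs
      rw [Equiv.Perm.coe_mul, ← Function.comp_assoc, hF _ _ _ (by simp), ih, Equiv.Perm.sign_mul,
        Equiv.Perm.sign_swap Fin.castSucc_lt_succ.ne]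
      simp

theorem extend_comp_swap {α β γ : Type*} [DecidableEq α] [DecidableEq β] {f : α → β}
    (hf : Function.Injective f) (v : α → γ) (c : β → γ) (x y : α) :
    Function.extend f (v ∘ Equiv.swap x y) c
      = Function.extend f v c ∘ Equiv.swap (f x) (f y) := by
  ext z
  by_cases hz : ∃ a, f a = z
  · obtain ⟨a, rfl⟩ := hz
    rw [Function.comp_apply, hf.swap_apply, hf.extend_apply, hf.extend_apply, Function.comp_apply]
  · have hzx : z ≠ f x := fun h => hz ⟨x, h.symm⟩
    have hzy : z ≠ f y := fun h => hz ⟨y, h.symm⟩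
    rw [Function.comp_apply, Equiv.swap_apply_of_ne_of_ne hzx hzy, Function.extend_apply' _ _ _ hz,
      Function.extend_apply' _ _ _ hz]

theorem val_add_two_injective (k : ℕ) : Function.Injective fun i : Fin k => (i : ℕ) + 2 :=
  (add_left_injective 2).comp Fin.val_injective

theorem extend_add_two_eq_dite {γ : Type*} {k : ℕ} (v : Fin k → γ) (c : ℕ → γ) :
    Function.extend (fun i : Fin k => (i : ℕ) + 2) v c
      = fun r => if h : 2 ≤ r ∧ r - 2 < k then v ⟨r - 2, h.2⟩ else c r := by
  ext r
  split_ifs with hr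
  · have hr' : ((⟨r - 2, hr.2⟩ : Fin k) : ℕ) + 2 = r := Nat.sub_add_cancel hr.1
    conv_lhs => rw [← hr']
    exact (val_add_two_injective k).extend_apply v c ⟨r - 2, hr.2⟩
  · refine Function.extend_apply' _ _ _ ?_
    rintro ⟨i, rfl⟩
    exact hr ⟨by omega, by simp⟩

end Permutation

section Brace

variable {K : Type*} [Field K] {N : ℕ} {b : ℕ → ℕ}
  {φ : ∀ r : ℕ, Matrix (Fin (b r)) (Fin (b (r + 1))) (MvPolynomial (Fin N) K)}
  {P : Fin N → Fin N → Fin (b 1) → K}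

theorem braceVec_succ (c : ℕ → Fin N) (r : ℕ) :
    braceVec φ P c (r + 1)
      = Matrix.vecMul (braceVec φ P c r) ((φ (r + 1)).map (pderiv (c (r + 2)))) :=
  rfl

theorem braceVec_congr {c d : ℕ → Fin N} {r : ℕ} (h : ∀ s ≤ r + 1, c s = d s) :
    braceVec φ P c r = braceVec φ P d r := by
  induction r with
  | zero => simp only [braceVec, h 0 (by omega), h 1 le_rfl]
  | succ r ih => rw [braceVec_succ, braceVec_succ, ih fun s hs => h s (by omega), h _ le_rfl]

theorem braceVec_comp_swap {t : ℕ}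
    (hA : ∀ p q, (φ (t + 1) p q).IsHomogeneous 1) (hB : ∀ p q, (φ (t + 2) p q).IsHomogeneous 1)
    (hAB : φ (t + 1) * φ (t + 2) = 0) (c : ℕ → Fin N) {r : ℕ} (hr : t + 2 ≤ r) :
    braceVec φ P (c ∘ Equiv.swap (t + 2) (t + 3)) r = -braceVec φ P c r := by
  have hfix : ∀ s, s ≠ t + 2 → s ≠ t + 3 → (c ∘ Equiv.swap (t + 2) (t + 3)) s = c s :=
    fun s h₂ h₃ => congrArg c (Equiv.swap_apply_of_ne_of_ne h₂ h₃)
  induction r, hr using Nat.le_induction with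
  | base =>
    have hprefix : braceVec φ P (c ∘ Equiv.swap (t + 2) (t + 3)) t = braceVec φ P c t :=
      braceVec_congr fun s hs => hfix s (by omega) (by omega)
    simp only [braceVec_succ, Matrix.vecMul_vecMul, hprefix, Function.comp_apply,
      Equiv.swap_apply_left, Equiv.swap_apply_right]
    rw [map_pderiv_mul_map_pderiv_eq_neg hA hB hAB, Matrix.vecMul_neg]
  | succ r hr ih =>
    rw [braceVec_succ, braceVec_succ, ih, hfix (r + 2) (by omega) (by omega), Matrix.neg_vecMul]

theorem braceFn_comp_swap {m n t : ℕ} (hm : t + 4 ≤ m) (hn : t + 6 ≤ n)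
    (Q : Fin N → Fin N → Fin (b (m - 1)) → K) (h : m - 1 = m - 2 + 1)
    (hA : ∀ p q, (φ (t + 1) p q).IsHomogeneous 1) (hB : ∀ p q, (φ (t + 2) p q).IsHomogeneous 1)
    (hAB : φ (t + 1) * φ (t + 2) = 0) (c : ℕ → Fin N) :
    braceFn φ P m Q h n (c ∘ Equiv.swap (t + 2) (t + 3)) = -braceFn φ P m Q h n c := by
  have hfix : ∀ s, t + 4 ≤ s → (c ∘ Equiv.swap (t + 2) (t + 3)) s = c s :=
    fun s hs => congrArg c (Equiv.swap_apply_of_ne_of_ne (by omega) (by omega))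
  simp only [braceFn, braceVec_comp_swap hA hB hAB c (show t + 2 ≤ m - 2 by omega),
    hfix (n - 2) (by omega), hfix (n - 1) (by omega), Pi.neg_apply, neg_mul,
    Finset.sum_neg_distrib]

theorem braceFn_extend_comp_perm {k m n : ℕ} (hm : k + 2 ≤ m) (hn : k + 4 ≤ n)
    (Q : Fin N → Fin N → Fin (b (m - 1)) → K) (h : m - 1 = m - 2 + 1)
    (hcomp : ∀ r, 1 ≤ r → r + 1 ≤ k → φ r * φ (r + 1) = 0)
    (hlin : ∀ r, 1 ≤ r → r ≤ k → ∀ p q, (φ r p q).IsHomogeneous 1)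
    (c : ℕ → Fin N) (v : Fin k → Fin N) (τ : Equiv.Perm (Fin k)) :
    braceFn φ P m Q h n (Function.extend (fun i : Fin k => (i : ℕ) + 2) (v ∘ τ) c)
      = (Equiv.Perm.sign τ : ℤ) •
        braceFn φ P m Q h n (Function.extend (fun i : Fin k => (i : ℕ) + 2) v c) := by
  refine comp_perm_eq_sign_smul_of_adjacent_swap
    (F := fun w => braceFn φ P m Q h n (Function.extend (fun i : Fin k => (i : ℕ) + 2) w c))
    (fun w i j hij => ?_) v τ
  simp only [extend_comp_swap (val_add_two_injective k), ← hij]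
  exact braceFn_comp_swap (by omega) (by omega) Q h (hlin _ (by omega) (by omega))
    (hlin _ (by omega) (by omega)) (hcomp _ (by omega) (by omega)) _

end Brace

theorem stmt11_general {K : Type*} [Field K] {N n m : ℕ} (hm : m = n - 2) {b : ℕ → ℕ}
    (φ : ∀ r : ℕ, Matrix (Fin (b r)) (Fin (b (r + 1))) (MvPolynomial (Fin N) K))
    (hcomp : ∀ r, 1 ≤ r → r + 3 ≤ m → φ r * φ (r + 1) = 0)
    (hlin : ∀ r, 1 ≤ r → r + 2 ≤ m → ∀ p q, (φ r p q).IsHomogeneous 1)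
    (P : Fin N → Fin N → Fin (b 1) → K) (Q : Fin N → Fin N → Fin (b (m - 1)) → K)
    (h : m - 1 = m - 2 + 1) (c : ℕ → Fin N) (τ : Equiv.Perm (Fin (n - 4))) :
    braceFn φ P m Q h n
        (fun r => if h : 2 ≤ r ∧ r - 2 < n - 4 then c (2 + (τ ⟨r - 2, h.2⟩ : ℕ)) else c r)
      = (Equiv.Perm.sign τ : ℤ) • braceFn φ P m Q h n c := by
  have hrestrict :
      Function.extend (fun i : Fin (n - 4) => (i : ℕ) + 2) (fun i => c (2 + i)) c = c := by
    simp +contextual [extend_add_two_eq_dite]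
  have hperm := braceFn_extend_comp_perm (P := P) (k := n - 4) (n := n) (by omega)
    (by omega) Q h (fun r h₁ hr => hcomp r h₁ (by omega)) (fun r h₁ hr => hlin r h₁ (by omega)) c
    (fun i => c (2 + i)) τ
  rwa [hrestrict, extend_add_two_eq_dite] at hperm

/-- In the brace setup (`n ≥ 5`), the brace symbol is alternating in its
middle `n − 4` entries: `{i, j, a_{τ(1)}, …, a_{τ(n−4)}, k, ℓ} = sign(τ)·{i, j, a_1, …,
a_{n−4}, k, ℓ}` for every `τ ∈ S_{n−4}`. (0-based: the middle entries occupy positions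
`2, …, n − 3` of the sequence `c`.) -/
theorem stmt11 (K : Type*) [Field K] (n : ℕ) (hn : 5 ≤ n) (m : ℕ) (hm : m = n - 2)
    (b : ℕ → ℕ) (hbpos : ∀ r, r ≤ m → 0 < b r) (hb0 : b 0 = 1) (hbm : b m = 1)
    (φ : ∀ r : ℕ, Matrix (Fin (b r)) (Fin (b (r + 1))) (MvPolynomial (Fin (n - 1)) K))
    (hcomp : ∀ r, r + 2 ≤ m → φ r * φ (r + 1) = 0)
    (hdeg1 : ∀ p q, (φ 0 p q).IsHomogeneous 2)
    (hdegm : ∀ p q, (φ (m - 1) p q).IsHomogeneous 2)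
    (hdegmid : ∀ r, 1 ≤ r → r + 2 ≤ m → ∀ p q, (φ r p q).IsHomogeneous 1)
    (P : Fin (n - 1) → Fin (n - 1) → Fin (b 1) → K)
    (Q : Fin (n - 1) → Fin (n - 1) → Fin (b (m - 1)) → K)
    (hPsymm : ∀ i j, P i j = P j i) (hQsymm : ∀ i j, Q i j = Q j i)
    (hP : ∀ (p : Fin (b 0)) (q : Fin (b 1)),
      φ 0 p q = ∑ i : Fin (n - 1), ∑ j : Fin (n - 1),
        if i ≤ j then C (P i j q) * X i * X j else 0)
    (hQ : ∀ (p : Fin (b (m - 1))) (q : Fin (b (m - 1 + 1))),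
      φ (m - 1) p q = ∑ i : Fin (n - 1), ∑ j : Fin (n - 1),
        if i ≤ j then C (Q i j p) * X i * X j else 0)
    (c : ℕ → Fin (n - 1)) (τ : Equiv.Perm (Fin (n - 4))) :
    braceFn φ P m Q (by omega) n
        (fun r => if h : 2 ≤ r ∧ r - 2 < n - 4 then c (2 + (τ ⟨r - 2, h.2⟩ : ℕ)) else c r)
      = (Equiv.Perm.sign τ : ℤ) • braceFn φ P m Q (by omega) n c := by
  exact stmt11_general hm φ (fun r _ hr => hcomp r (by omega)) hdegmid P Q (by omega) c τ
end
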